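/- arXiv:1105.4511 — 5 statements merged into one kernel-verified Lean document; each statement's English description precedes it below -/
import Mathlib

section
/- Let d ≥ 1 and let h : (0,∞) → (0,∞) be continuous. Then the action density φ : (0,∞) × ℝ^d → ℝ defined by φ(ρ,w) := |w|²/h(ρ) is a convex function of the pair (ρ,w) if and only if h is concave on (0,∞). -/
open Set

/-- For a continuous positive function `h` on `(0,∞)`, the action density
`φ(ρ, w) = ‖w‖² / h(ρ)` on `(0,∞) × ℝᵈ` is convex (jointly in `(ρ, w)`) if and only if `h`
is concave on `(0,∞)`. -/
theorem action_density_convex_iff_concave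
    (d : ℕ) (hd : 1 ≤ d) (h : ℝ → ℝ)
    (hcont : ContinuousOn h (Ioi 0))
    (hpos : ∀ x ∈ Ioi (0 : ℝ), 0 < h x) :
    ConvexOn ℝ {p : ℝ × EuclideanSpace ℝ (Fin d) | 0 < p.1}
        (fun p : ℝ × EuclideanSpace ℝ (Fin d) => ‖p.2‖ ^ 2 / h p.1) ↔
      ConcaveOn ℝ (Ioi 0) h := by
  constructor
  · intro hc
    refine ⟨convex_Ioi 0, ?_⟩
    intro x hx y hy a b ha hb hab
    have hz : a • x + b • y ∈ Ioi (0 : ℝ) := convex_Ioi 0 hx hy ha hb hab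
    have hA := hpos x hx
    have hB := hpos y hy
    have hC := hpos _ hz
    let e : EuclideanSpace ℝ (Fin d) := EuclideanSpace.single ⟨0, hd⟩ 1
    have he : ‖e‖ = 1 := by simp [e]
    have key := hc.2 (x := (x, h x • e)) (y := (y, h y • e)) hx hy ha hb hab
    have h1 : (a • (x, h x • e) + b • (y, h y • e) : ℝ × EuclideanSpace ℝ (Fin d))
        = (a • x + b • y, (a * h x + b * h y) • e) := by
      ext1
      · simp
      · simp [add_smul, mul_smul]
    rw [h1] at key
    simp only [norm_smul, he, mul_one, Real.norm_eq_abs, sq_abs] at key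
    simp only [smul_eq_mul] at key hz hC ⊢
    have e1 : h x ^ 2 / h x = h x := by field_simp
    have e2 : h y ^ 2 / h y = h y := by field_simp
    rw [e1, e2, div_le_iff₀ hC] at key
    have hS : 0 < a * h x + b * h y := convex_Ioi (0 : ℝ) hA hB ha hb hab
    nlinarith
  · intro hc
    refine ⟨?_, ?_⟩
    · intro p hp q hq a b ha hb hab
      exact convex_Ioi (0 : ℝ) hp hq ha hb hab
    · rintro ⟨x, u⟩ hx ⟨y, v⟩ hy a b ha hb hab
      have hx' : x ∈ Ioi (0 : ℝ) := hx
      have hy' : y ∈ Ioi (0 : ℝ) := hy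
      have hA := hpos x hx'
      have hB := hpos y hy'
      have hS : 0 < a * h x + b * h y := convex_Ioi (0 : ℝ) hA hB ha hb hab
      have hle := hc.2 hx' hy' ha hb hab
      simp only [Prod.smul_mk, Prod.mk_add_mk, smul_eq_mul] at hle ⊢
      have hn : ‖a • u + b • v‖ ≤ a * ‖u‖ + b * ‖v‖ := by
        refine (norm_add_le _ _).trans_eq ?_
        rw [norm_smul, norm_smul, Real.norm_of_nonneg ha, Real.norm_of_nonneg hb]
      calc ‖a • u + b • v‖ ^ 2 / h (a * x + b * y)
          ≤ (a * ‖u‖ + b * ‖v‖) ^ 2 / (a * h x + b * h y) := by gcongr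
        _ ≤ a * (‖u‖ ^ 2 / h x) + b * (‖v‖ ^ 2 / h y) := by
          rw [div_le_iff₀ hS, ← sub_nonneg]
          have : (a * (‖u‖ ^ 2 / h x) + b * (‖v‖ ^ 2 / h y)) * (a * h x + b * h y)
              - (a * ‖u‖ + b * ‖v‖) ^ 2
              = a * b * (h y * ‖u‖ - h x * ‖v‖) ^ 2 / (h x * h y) := by
            field_simp
            ring
          rw [this]
          positivity
end

section
/- Let h : (0,∞) → (0,∞) be concave and nondecreasing, and let ψ : (0,∞) → ℝ be twice continuously differentiable with ψ''(x) = 1/h(x) for all x > 0, ψ convex, and lim_{x→0⁺} ψ(x) = 0. Then ψ satisfies McCann's conditions: for every x > 0, x·ψ'(x) − ψ(x) ≥ 0 and x²·ψ''(x) − x·ψ'(x) + ψ(x) ≥ 0. Equivalently, the map s ↦ e^{s} ψ(e^{−s}) is convex and nonincreasing on ℝ. -/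
open Set

/-- Tangent-line inequality up to the endpoint `0`. -/
lemma tangent_at_zero {f : ℝ → ℝ} {f' x : ℝ} (hx : 0 < x) (hf : ConvexOn ℝ (Ioc 0 x) f)
    (hd : HasDerivAt f f' x)
    (h0 : Filter.Tendsto f (nhdsWithin 0 (Ioi 0)) (nhds 0)) : f x ≤ x * f' := by
  have key : ∀ᶠ y in nhdsWithin (0 : ℝ) (Ioi 0), f x - f y ≤ (x - y) * f' := by
    filter_upwards [Ioo_mem_nhdsGT hx] with y hy
    have := hf.slope_le_of_hasDerivAt (x := y) (y := x) ⟨hy.1, hy.2.le⟩ ⟨hx, le_rfl⟩ hy.2 hd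
    rw [slope_def_field, div_le_iff₀ (by linarith [hy.2])] at this
    linarith
  have hid : Filter.Tendsto (fun y : ℝ => y) (nhdsWithin 0 (Ioi 0)) (nhds 0) :=
    Filter.tendsto_id.mono_left nhdsWithin_le_nhds
  have h1 : Filter.Tendsto (fun y => f x - f y) (nhdsWithin 0 (Ioi 0)) (nhds (f x - 0)) :=
    h0.const_sub _
  have h2 : Filter.Tendsto (fun y => (x - y) * f') (nhdsWithin 0 (Ioi 0)) (nhds ((x - 0) * f')) :=
    (hid.const_sub x).mul_const f'
  simpa using le_of_tendsto_of_tendsto h1 h2 key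

/-- A positive concave function on `(0,∞)` has `h(y)/y` nonincreasing. -/
lemma concave_ratio {h : ℝ → ℝ} (hconc : ConcaveOn ℝ (Ioi 0) h)
    (hpos : ∀ x ∈ Ioi (0 : ℝ), 0 < h x) {x y : ℝ} (hy : 0 < y) (hyx : y ≤ x) :
    y * h x ≤ x * h y := by
  have hx : 0 < x := hy.trans_le hyx
  have key : ∀ᶠ e in nhdsWithin (0 : ℝ) (Ioi 0), (y - e) * h x ≤ (x - e) * h y := by
    filter_upwards [Ioo_mem_nhdsGT hy] with e he
    have hxe : 0 < x - e := by linarith [he.2]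
    have hc := hconc.2 (mem_Ioi.2 he.1) (mem_Ioi.2 hx)
      (show 0 ≤ (x - y) / (x - e) from div_nonneg (by linarith) hxe.le)
      (show 0 ≤ (y - e) / (x - e) from div_nonneg (by linarith [he.2]) hxe.le)
      (by field_simp; ring)
    have e1 : (x - y) / (x - e) * e + (y - e) / (x - e) * x = y := by field_simp; ring
    simp only [smul_eq_mul] at hc
    rw [e1] at hc
    have h3 : 0 ≤ (x - y) / (x - e) * h e :=
      mul_nonneg (div_nonneg (by linarith) hxe.le) (hpos e he.1).le
    have h4 : (y - e) / (x - e) * h x ≤ h y := by linarith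
    rw [div_mul_eq_mul_div, div_le_iff₀ hxe] at h4
    linarith
  have hid : Filter.Tendsto (fun y : ℝ => y) (nhdsWithin 0 (Ioi 0)) (nhds 0) :=
    Filter.tendsto_id.mono_left nhdsWithin_le_nhds
  simpa using le_of_tendsto_of_tendsto ((hid.const_sub y).mul_const (h x))
    ((hid.const_sub x).mul_const (h y)) key

/-- If `h : (0,∞) → (0,∞)` is concave and nondecreasing and `ψ` is a `C²`
convex function on `(0,∞)` with `ψ'' = 1/h` and `ψ(0⁺) = 0`, then `ψ` satisfies McCann's
conditions: `x ψ'(x) − ψ(x) ≥ 0` and `x² ψ''(x) − x ψ'(x) + ψ(x) ≥ 0` for all `x > 0`;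
equivalently, the map `s ↦ e^s ψ(e^{−s})` is convex and nonincreasing. -/
theorem mccann_conditions
    (h : ℝ → ℝ) (hconc : ConcaveOn ℝ (Ioi 0) h) (hmono : MonotoneOn h (Ioi 0))
    (hpos : ∀ x ∈ Ioi (0 : ℝ), 0 < h x)
    (ψ : ℝ → ℝ) (hψC2 : ContDiffOn ℝ 2 ψ (Ioi 0))
    (hψ'' : ∀ x ∈ Ioi (0 : ℝ), deriv (deriv ψ) x = 1 / h x)
    (hψconv : ConvexOn ℝ (Ioi 0) ψ)
    (hψ0 : Filter.Tendsto ψ (nhdsWithin 0 (Ioi 0)) (nhds 0)) :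
    (∀ x ∈ Ioi (0 : ℝ), 0 ≤ x * deriv ψ x - ψ x) ∧
    (∀ x ∈ Ioi (0 : ℝ), 0 ≤ x ^ 2 * deriv (deriv ψ) x - x * deriv ψ x + ψ x) ∧
    ConvexOn ℝ univ (fun s : ℝ => Real.exp s * ψ (Real.exp (-s))) ∧
    Antitone (fun s : ℝ => Real.exp s * ψ (Real.exp (-s))) := by
  have hC : ContDiffOn ℝ (1 + 1) ψ (Ioi 0) := by rw [one_add_one_eq_two]; exact hψC2
  rw [contDiffOn_succ_iff_deriv_of_isOpen isOpen_Ioi] at hC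
  have hd1 : ∀ x ∈ Ioi (0 : ℝ), HasDerivAt ψ (deriv ψ x) x := fun x hx =>
    (hC.1.differentiableAt (isOpen_Ioi.mem_nhds hx)).hasDerivAt
  have hd2 : ∀ x ∈ Ioi (0 : ℝ), HasDerivAt (deriv ψ) (deriv (deriv ψ) x) x := fun x hx =>
    ((hC.2.2.differentiableOn one_ne_zero).differentiableAt (isOpen_Ioi.mem_nhds hx)).hasDerivAt
  have A : ∀ x ∈ Ioi (0 : ℝ), 0 ≤ x * deriv ψ x - ψ x := by
    intro x hx
    have := tangent_at_zero hx (hψconv.subset Ioc_subset_Ioi_self (convex_Ioc 0 x)) (hd1 x hx) hψ0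
    linarith
  have B : ∀ x ∈ Ioi (0 : ℝ), 0 ≤ x ^ 2 * deriv (deriv ψ) x - x * deriv ψ x + ψ x := by
    intro x hx
    have hx0 : 0 < x := hx
    have hhx := hpos x hx
    obtain ⟨c, hc⟩ : ∃ c, c = x / h x := ⟨_, rfl⟩
    have hf' : ∀ y ∈ Ioi (0 : ℝ), HasDerivAt (fun y => c * (y * Real.log y) - ψ y)
        (c * (Real.log y + 1) - deriv ψ y) y := fun y hy =>
      ((Real.hasDerivAt_mul_log (ne_of_gt hy)).const_mul c).sub (hd1 y hy)
    have hf'' : ∀ y ∈ Ioi (0 : ℝ), HasDerivAt (fun y => c * (Real.log y + 1) - deriv ψ y)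
        (c * y⁻¹ - deriv (deriv ψ) y) y := fun y hy =>
      (((Real.hasDerivAt_log (ne_of_gt hy)).add_const 1).const_mul c).sub (hd2 y hy)
    have hconv : ConvexOn ℝ (Ioc 0 x) (fun y => c * (y * Real.log y) - ψ y) := by
      refine convexOn_of_hasDerivWithinAt2_nonneg (convex_Ioc 0 x)
        (fun y hy => (hf' y hy.1).continuousAt.continuousWithinAt)
        (fun y hy => (hf' y (interior_subset hy).1).hasDerivWithinAt)
        (fun y hy => (hf'' y (interior_subset hy).1).hasDerivWithinAt) ?_
      intro y hy
      have hy' := interior_subset hy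
      have hy0 : 0 < y := hy'.1
      have hhy := hpos y hy0
      have := concave_ratio hconc hpos hy0 hy'.2
      rw [hψ'' y hy0, hc, sub_nonneg, ← div_eq_mul_inv, div_div, div_le_div_iff₀ hhy (by positivity)]
      linarith
    have ht : Filter.Tendsto (fun y => c * (y * Real.log y) - ψ y)
        (nhdsWithin 0 (Ioi 0)) (nhds 0) := by
      have h1 : Filter.Tendsto (fun y : ℝ => y * Real.log y) (nhdsWithin 0 (Ioi 0)) (nhds 0) := by
        have := (Real.continuous_mul_log.tendsto 0).mono_left
          (nhdsWithin_le_nhds (s := Ioi (0 : ℝ)))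
        simpa using this
      simpa using (h1.const_mul c).sub hψ0
    have := tangent_at_zero hx0 hconv (hf' x hx) ht
    have e : x ^ 2 * deriv (deriv ψ) x = c * x := by
      rw [hψ'' x hx, hc]; field_simp
    rw [e]
    linarith
  have hneg : ∀ s : ℝ, HasDerivAt (fun s : ℝ => Real.exp (-s)) (-Real.exp (-s)) s := fun s => by
    simpa using (hasDerivAt_neg s).exp
  have hee : ∀ s : ℝ, Real.exp s * Real.exp (-s) = 1 := fun s => by
    rw [← Real.exp_add]; simp
  have hF' : ∀ s : ℝ, HasDerivAt (fun s : ℝ => Real.exp s * ψ (Real.exp (-s)))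
      (Real.exp s * ψ (Real.exp (-s)) - deriv ψ (Real.exp (-s))) s := fun s => by
    have h1 := (Real.hasDerivAt_exp s).mul
      ((hd1 _ (Real.exp_pos (-s))).comp s (hneg s))
    refine h1.congr_deriv ?_
    simp only [Function.comp]
    linear_combination (-deriv ψ (Real.exp (-s))) * hee s
  have hF'' : ∀ s : ℝ, HasDerivAt
      (fun s : ℝ => Real.exp s * ψ (Real.exp (-s)) - deriv ψ (Real.exp (-s)))
      (Real.exp s * ψ (Real.exp (-s)) - deriv ψ (Real.exp (-s))
        + deriv (deriv ψ) (Real.exp (-s)) * Real.exp (-s)) s := fun s => by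
    have h1 := (hF' s).sub ((hd2 _ (Real.exp_pos (-s))).comp s (hneg s))
    refine h1.congr_deriv ?_
    ring
  refine ⟨A, B, ?_, ?_⟩
  · refine convexOn_of_hasDerivWithinAt2_nonneg convex_univ
      (fun s _ => (hF' s).continuousAt.continuousWithinAt)
      (fun s _ => (hF' s).hasDerivWithinAt) (fun s _ => (hF'' s).hasDerivWithinAt) ?_
    intro s _
    have h1 := mul_nonneg (Real.exp_pos s).le (B _ (Real.exp_pos (-s)))
    refine h1.trans_eq ?_
    linear_combination (Real.exp (-s) * deriv (deriv ψ) (Real.exp (-s))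
      - deriv ψ (Real.exp (-s))) * hee s
  · refine antitone_of_hasDerivAt_nonpos hF' ?_
    intro s
    have h1 := mul_nonneg (Real.exp_pos s).le (A _ (Real.exp_pos (-s)))
    have h2 : Real.exp s * (Real.exp (-s) * deriv ψ (Real.exp (-s)) - ψ (Real.exp (-s)))
        = deriv ψ (Real.exp (-s)) - Real.exp s * ψ (Real.exp (-s)) := by
      linear_combination (deriv ψ (Real.exp (-s))) * hee s
    simp only [Pi.zero_apply]
    linarith
end

section
/- Let γ be a finite Borel measure on ℝ^d and let h : (0,∞) → (0,∞) be concave and nondecreasing. Let ρ : ℝ^d → (0,∞) and w : ℝ^d → ℝ^d be measurable with ρ ∈ L¹(γ), and let ζ : ℝ^d → [0,∞) be a Borel function with 0 < ∫ ζ² dγ < ∞ and ∫ ζ² ρ dγ < ∞. Then ( ∫_{ℝ^d} ζ |w| dγ )² ≤ ( ∫_{ℝ^d} |w|²/h(ρ) dγ ) · ( ∫ ζ² dγ ) · h( (∫ ζ² ρ dγ) / (∫ ζ² dγ) ). -/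
open Set MeasureTheory ENNReal

theorem exists_supporting_line (h : ℝ → ℝ) (hconc : ConcaveOn ℝ (Ioi 0) h) (m : ℝ) (hm : 0 < m) :
    ∃ a : ℝ, ∀ y, 0 < y → h y ≤ h m + a * (y - m) := by
  have key : ∀ x y, 0 < x → x < m → m < y →
      (h y - h m) / (y - m) ≤ (h m - h x) / (m - x) := fun x y hx hxm hmy =>
    hconc.slope_anti_adjacent hx (mem_Ioi.2 (hm.trans hmy)) hxm hmy
  set S : Set ℝ := Set.image (fun y => (h y - h m) / (y - m)) (Ioi m) with hS
  have hbdd : BddAbove S := by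
    refine ⟨(h m - h (m/2)) / (m - m/2), ?_⟩
    rintro _ ⟨y, hy, rfl⟩
    exact key _ y (by linarith) (by linarith) hy
  have hne : S.Nonempty := ⟨_, m + 1, by simp, rfl⟩
  refine ⟨sSup S, fun y hy => ?_⟩
  rcases lt_trichotomy y m with hym | rfl | hym
  · have h1 : sSup S ≤ (h m - h y) / (m - y) := by
      apply csSup_le hne
      rintro _ ⟨z, hz, rfl⟩
      exact key y z hy hym hz
    rw [le_div_iff₀ (by linarith)] at h1
    linarith
  · simp
  · have h1 : (h y - h m) / (y - m) ≤ sSup S := le_csSup hbdd ⟨y, hym, rfl⟩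
    rw [div_le_iff₀ (by linarith)] at h1
    linarith

/-- Equi-integrability estimate: for a finite measure `γ`, a concave
nondecreasing weight `h`, a positive density `ρ` and a weight function `ζ` with
`0 < ∫ ζ² dγ < ∞` and `∫ ζ² ρ dγ < ∞`, one has
`(∫ ζ |w| dγ)² ≤ (∫ |w|²/h(ρ) dγ) · (∫ ζ² dγ) · h((∫ ζ² ρ dγ)/(∫ ζ² dγ))`. -/
theorem equi_integrability_estimate
    (d : ℕ) (γ : Measure (EuclideanSpace ℝ (Fin d))) [IsFiniteMeasure γ]
    (h : ℝ → ℝ) (hconc : ConcaveOn ℝ (Ioi 0) h) (hmono : MonotoneOn h (Ioi 0))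
    (hpos : ∀ x ∈ Ioi (0 : ℝ), 0 < h x)
    (ρ : EuclideanSpace ℝ (Fin d) → ℝ)
    (w : EuclideanSpace ℝ (Fin d) → EuclideanSpace ℝ (Fin d))
    (ζ : EuclideanSpace ℝ (Fin d) → ℝ)
    (hρm : Measurable ρ) (hwm : Measurable w) (hζm : Measurable ζ)
    (hρpos : ∀ x, 0 < ρ x) (hζ0 : ∀ x, 0 ≤ ζ x)
    (hρint : Integrable ρ γ)
    (hζ2int : Integrable (fun x => ζ x ^ 2) γ)
    (hζ2pos : 0 < ∫ x, ζ x ^ 2 ∂γ)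
    (hζ2ρint : Integrable (fun x => ζ x ^ 2 * ρ x) γ) :
    (∫⁻ x, ENNReal.ofReal (ζ x * ‖w x‖) ∂γ) ^ 2 ≤
      (∫⁻ x, ENNReal.ofReal (‖w x‖ ^ 2 / h (ρ x)) ∂γ) *
        ENNReal.ofReal (∫ x, ζ x ^ 2 ∂γ) *
        ENNReal.ofReal (h ((∫ x, ζ x ^ 2 * ρ x ∂γ) / (∫ x, ζ x ^ 2 ∂γ))) := by
  have hhm : Measurable (fun x => h (ρ x)) := by
    have hc := hconc.continuousOn isOpen_Ioi
    have h1 := (continuousOn_iff_continuous_domRestrict.1 hc).measurable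
    exact h1.comp (hρm.subtype_mk (h := fun x => mem_Ioi.2 (hρpos x)))
  have hhp : ∀ x, 0 < h (ρ x) := fun x => hpos _ (hρpos x)
  set Z := ∫ x, ζ x ^ 2 ∂γ with hZ
  set R := ∫ x, ζ x ^ 2 * ρ x ∂γ with hR
  have hRpos : 0 < R := by
    rw [hR, integral_pos_iff_support_of_nonneg
      (fun x => mul_nonneg (sq_nonneg _) (hρpos x).le) hζ2ρint]
    rw [hZ, integral_pos_iff_support_of_nonneg (fun x => sq_nonneg _) hζ2int] at hζ2pos
    convert hζ2pos using 2
    ext x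
    simp [(hρpos x).ne']
  have hmpos : 0 < R / Z := div_pos hRpos hζ2pos
  obtain ⟨a, ha⟩ := exists_supporting_line h hconc (R / Z) hmpos
  have hJ : ∫⁻ x, ENNReal.ofReal (ζ x ^ 2 * h (ρ x)) ∂γ ≤
      ENNReal.ofReal Z * ENNReal.ofReal (h (R / Z)) := by
    have hle : ∀ x, ζ x ^ 2 * h (ρ x) ≤
        (h (R / Z) - a * (R / Z)) * ζ x ^ 2 + a * (ζ x ^ 2 * ρ x) := fun x => by
      have := mul_le_mul_of_nonneg_left (ha (ρ x) (hρpos x)) (sq_nonneg (ζ x))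
      linarith
    have hi1 := hζ2int.const_mul (h (R / Z) - a * (R / Z))
    have hi2 := hζ2ρint.const_mul a
    calc _ ≤ ∫⁻ x, ENNReal.ofReal
          ((h (R / Z) - a * (R / Z)) * ζ x ^ 2 + a * (ζ x ^ 2 * ρ x)) ∂γ :=
          lintegral_mono fun x => ENNReal.ofReal_le_ofReal (hle x)
      _ = ENNReal.ofReal (∫ x,
          ((h (R / Z) - a * (R / Z)) * ζ x ^ 2 + a * (ζ x ^ 2 * ρ x)) ∂γ) := by
          exact (ofReal_integral_eq_lintegral_ofReal (hi1.add hi2)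
            (Filter.Eventually.of_forall fun x =>
              (mul_nonneg (sq_nonneg _) (hhp x).le).trans (hle x))).symm
      _ = ENNReal.ofReal Z * ENNReal.ofReal (h (R / Z)) := by
          rw [integral_add hi1 hi2, integral_const_mul, integral_const_mul, ← hZ, ← hR,
            ← ENNReal.ofReal_mul hζ2pos.le]
          congr 1
          field_simp
          ring
  have hCS := ENNReal.lintegral_mul_le_Lp_mul_Lq γ Real.HolderConjugate.two_two
    (f := fun x => ENNReal.ofReal (‖w x‖ / √(h (ρ x))))
    (g := fun x => ENNReal.ofReal (ζ x * √(h (ρ x))))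
    (hwm.norm.div hhm.sqrt).ennreal_ofReal.aemeasurable
    (hζm.mul hhm.sqrt).ennreal_ofReal.aemeasurable
  have e0 : ∀ x, ((fun x => ENNReal.ofReal (‖w x‖ / √(h (ρ x)))) *
      (fun x => ENNReal.ofReal (ζ x * √(h (ρ x))))) x = ENNReal.ofReal (ζ x * ‖w x‖) := fun x => by
    have := Real.sqrt_pos.2 (hhp x)
    rw [Pi.mul_apply, ← ENNReal.ofReal_mul (by positivity)]
    congr 1
    field_simp
  have e1 : ∀ x, ENNReal.ofReal (‖w x‖ / √(h (ρ x))) ^ (2 : ℝ) =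
      ENNReal.ofReal (‖w x‖ ^ 2 / h (ρ x)) := fun x => by
    rw [ENNReal.rpow_two, ← ENNReal.ofReal_pow (by positivity), div_pow, Real.sq_sqrt (hhp x).le]
  have e2 : ∀ x, ENNReal.ofReal (ζ x * √(h (ρ x))) ^ (2 : ℝ) =
      ENNReal.ofReal (ζ x ^ 2 * h (ρ x)) := fun x => by
    rw [ENNReal.rpow_two, ← ENNReal.ofReal_pow (mul_nonneg (hζ0 x) (Real.sqrt_nonneg _)),
      mul_pow, Real.sq_sqrt (hhp x).le]
  simp only [e0, e1, e2] at hCS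
  have hsq : ∀ t : ℝ≥0∞, (t ^ (1 / 2 : ℝ)) ^ 2 = t := fun t => by
    rw [← ENNReal.rpow_two, ← ENNReal.rpow_mul]
    norm_num
  calc _ ≤ _ := pow_le_pow_left' hCS 2
    _ = (∫⁻ x, ENNReal.ofReal (‖w x‖ ^ 2 / h (ρ x)) ∂γ) *
        ∫⁻ x, ENNReal.ofReal (ζ x ^ 2 * h (ρ x)) ∂γ := by rw [mul_pow, hsq, hsq]
    _ ≤ _ := by
      rw [mul_assoc]
      gcongr
end

section
/- Let γ be a finite Borel measure on ℝ^d and let h : [0,∞) → [0,∞) be continuous, concave, nondecreasing and positive on (0,∞). Let (ρ_n) and ρ be nonnegative functions in L¹(γ), and (w_n) and w functions in L¹(γ;ℝ^d), and assume that for every bounded continuous function f : ℝ^d → ℝ one has ∫ f ρ_n dγ → ∫ f ρ dγ and ∫ f w_n dγ → ∫ f w dγ (componentwise) as n → ∞. Then liminf_{n→∞} ∫_{ℝ^d} φ(ρ_n, w_n) dγ ≥ ∫_{ℝ^d} φ(ρ, w) dγ. -/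
open Set MeasureTheory ENNReal Filter

/-- The (extended-real-valued) action density `φ(r, v) = ‖v‖² / h(r)`, with the conventions
`φ(r, 0) = 0` and `φ(r, v) = +∞` when `h(r) = 0` and `v ≠ 0` (recall that in `ℝ≥0∞` one has
`a / 0 = ∞` for `a ≠ 0` and `0 / 0 = 0`). -/
noncomputable def actionDensityE (h : ℝ → ℝ) {E : Type*} [NormedAddCommGroup E]
    (r : ℝ) (v : E) : ℝ≥0∞ :=
  ENNReal.ofReal (‖v‖ ^ 2) / ENNReal.ofReal (h r)

lemma sec_bound (h : ℝ → ℝ) (hconc : ConcaveOn ℝ (Ici 0) h)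
    (hmono : MonotoneOn h (Ici 0)) (δ r s : ℝ) (hδ : 0 < δ) (hr : 0 ≤ r) (hs : 0 ≤ s) :
    h s ≤ h (r + δ) + (h (r+δ) - h r)/δ * (s - r) := by
  have hβ : 0 ≤ (h (r+δ) - h r)/δ :=
    div_nonneg (sub_nonneg.2 (hmono hr (by simp; linarith) (by linarith))) hδ.le
  set β := (h (r+δ) - h r)/δ with hβd
  have hβ2 : β * δ = h (r+δ) - h r := by rw [hβd]; field_simp
  rcases lt_or_ge s r with h1 | h1
  · have := hconc.slope_anti_adjacent (x := s) (y := r) (z := r + δ) hs (by simp; linarith) h1 (by linarith)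
    rw [show r + δ - r = δ by ring, ← hβd, le_div_iff₀ (by linarith)] at this
    nlinarith
  rcases le_or_gt s (r+δ) with h2 | h2
  · have := hmono hs (by simp; linarith) h2
    nlinarith
  · have := hconc.slope_anti_adjacent (x := r) (y := r+δ) (z := s) hr hs (by linarith) (by linarith)
    rw [show r + δ - r = δ by ring, ← hβd, div_le_iff₀ (by linarith)] at this
    nlinarith

lemma young {E : Type*} [NormedAddCommGroup E] [InnerProductSpace ℝ E] (q v : E) (H : ℝ)
    (hH : 0 ≤ H) :
    ENNReal.ofReal (2 * inner ℝ q v - ‖q‖^2 * H) ≤ ENNReal.ofReal (‖v‖ ^ 2) / ENNReal.ofReal H := by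
  rcases hH.eq_or_lt with rfl | hH
  · by_cases hv : v = 0
    · simp [hv]
    · rw [ENNReal.ofReal_zero, ENNReal.div_zero]
      · exact le_top
      · simpa using hv
  · rw [← ENNReal.ofReal_div_of_pos hH]
    apply ENNReal.ofReal_le_ofReal
    rw [le_div_iff₀ hH]
    have := real_inner_le_norm q v
    nlinarith [sq_nonneg (‖q‖ * H - ‖v‖), mul_le_mul_of_nonneg_right this hH.le]


lemma ofReal_int_le {α : Type*} [MeasurableSpace α] {μ : Measure α} {f : α → ℝ}
    (hf : Integrable f μ) : ENNReal.ofReal (∫ x, f x ∂μ) ≤ ∫⁻ x, ENNReal.ofReal (f x) ∂μ := by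
  rw [integral_eq_lintegral_pos_part_sub_lintegral_neg_part hf]
  refine (ENNReal.ofReal_le_ofReal (sub_le_self _ ENNReal.toReal_nonneg)).trans ?_
  exact ENNReal.ofReal_toReal_le

lemma L_bound {E : Type*} [NormedAddCommGroup E] [InnerProductSpace ℝ E] (q v : E) (a b r C : ℝ)
    (hq : ‖q‖ ≤ C) (ha : |a| ≤ C) (hb : |b| ≤ C) :
    ‖2 * inner ℝ q v - a - b * r‖ ≤ 2 * (C * ‖v‖) + C + C * ‖r‖ := by
  have h1 := abs_real_inner_le_norm q v
  have h2 : ‖q‖ * ‖v‖ ≤ C * ‖v‖ := by gcongr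
  have h3 : |b * r| ≤ C * |r| := by rw [abs_mul]; gcongr
  rw [Real.norm_eq_abs, Real.norm_eq_abs]
  rw [abs_le] at *
  constructor <;> linarith [h1.1, h1.2, h3.1, h3.2, ha.1, ha.2]

lemma core_cont
    (d : ℕ) (γ : Measure (EuclideanSpace ℝ (Fin d))) [IsFiniteMeasure γ]
    (h : ℝ → ℝ)
    (ρs : ℕ → EuclideanSpace ℝ (Fin d) → ℝ) (ρ : EuclideanSpace ℝ (Fin d) → ℝ)
    (ws : ℕ → EuclideanSpace ℝ (Fin d) → EuclideanSpace ℝ (Fin d))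
    (w : EuclideanSpace ℝ (Fin d) → EuclideanSpace ℝ (Fin d))
    (hρsint : ∀ n, Integrable (ρs n) γ) (hρint : Integrable ρ γ)
    (hρs0 : ∀ n x, 0 ≤ ρs n x)
    (hwsint : ∀ n, Integrable (ws n) γ) (hwint : Integrable w γ)
    (hweakρ : ∀ f : EuclideanSpace ℝ (Fin d) → ℝ, Continuous f → (∃ C, ∀ x, |f x| ≤ C) →
      Tendsto (fun n => ∫ x, f x * ρs n x ∂γ) atTop (nhds (∫ x, f x * ρ x ∂γ)))
    (hweakw : ∀ f : EuclideanSpace ℝ (Fin d) → ℝ, Continuous f → (∃ C, ∀ x, |f x| ≤ C) →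
      ∀ i : Fin d,
        Tendsto (fun n => ∫ x, f x * ws n x i ∂γ) atTop (nhds (∫ x, f x * w x i ∂γ)))
    (Q : EuclideanSpace ℝ (Fin d) → EuclideanSpace ℝ (Fin d))
    (A B : EuclideanSpace ℝ (Fin d) → ℝ) (hQ : Continuous Q) (hA : Continuous A)
    (hB : Continuous B) (C : ℝ) (hQC : ∀ x, ‖Q x‖ ≤ C) (hAC : ∀ x, |A x| ≤ C)
    (hBC : ∀ x, |B x| ≤ C)
    (hle : ∀ x r v, 0 ≤ r → ENNReal.ofReal (2 * inner ℝ (Q x) v - A x - B x * r)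
      ≤ actionDensityE h r v) :
    ENNReal.ofReal (∫ x, (2 * inner ℝ (Q x) (w x) - A x - B x * ρ x) ∂γ) ≤
      Filter.liminf (fun n => ∫⁻ x, actionDensityE h (ρs n x) (ws n x) ∂γ) atTop := by
  have hQiC : ∀ i x, |Q x i| ≤ C := fun i x => (PiLp.norm_apply_le (Q x) i).trans (hQC x)
  have hQic : ∀ i, Continuous fun x => Q x i := fun i => by fun_prop
  have hint : ∀ (r : EuclideanSpace ℝ (Fin d) → ℝ)
      (v : EuclideanSpace ℝ (Fin d) → EuclideanSpace ℝ (Fin d)), Integrable r γ → Integrable v γ →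
      Integrable (fun x => 2 * inner ℝ (Q x) (v x) - A x - B x * r x) γ := by
    intro r v hr hv
    refine Integrable.mono' (g := fun x => 2 * (C * ‖v x‖) + C + C * ‖r x‖) ?_ ?_ ?_
    · exact (((hv.norm.const_mul C).const_mul 2).add (integrable_const C)).add
        (hr.norm.const_mul C)
    · have h1 := hQ.aestronglyMeasurable (μ := γ)
      have h2 := hA.aestronglyMeasurable (μ := γ)
      have h3 := hB.aestronglyMeasurable (μ := γ)
      exact (((h1.inner hv.1).const_mul 2).sub h2).sub (h3.mul hr.1)
    · exact Eventually.of_forall fun x => L_bound _ _ _ _ _ _ (hQC x) (hAC x) (hBC x)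
  have heq : ∀ (r : EuclideanSpace ℝ (Fin d) → ℝ)
      (v : EuclideanSpace ℝ (Fin d) → EuclideanSpace ℝ (Fin d)), Integrable r γ → Integrable v γ →
      ∫ x, (2 * inner ℝ (Q x) (v x) - A x - B x * r x) ∂γ
        = 2 * ∑ i, ∫ x, Q x i * v x i ∂γ - ∫ x, A x ∂γ - ∫ x, B x * r x ∂γ := by
    intro r v hr hv
    have i1 : ∀ i, Integrable (fun x => Q x i * v x i) γ := by
      intro i
      have hvi : Integrable (fun x => v x i) γ :=
        hv.mono ((EuclideanSpace.proj (𝕜 := ℝ) i).continuous.comp_aestronglyMeasurable hv.1)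
          (Eventually.of_forall fun x => PiLp.norm_apply_le (v x) i)
      exact hvi.bdd_mul (hQic i).aestronglyMeasurable (Eventually.of_forall (hQiC i))
    have i2 : Integrable A γ := Integrable.of_bound hA.aestronglyMeasurable C
      (Eventually.of_forall hAC)
    have i3 : Integrable (fun x => B x * r x) γ :=
      hr.bdd_mul hB.aestronglyMeasurable (Eventually.of_forall hBC)
    have i4 : Integrable (fun x => ∑ i, Q x i * v x i) γ := integrable_finsetSum _ fun i _ => i1 i
    have : ∀ x, inner ℝ (Q x) (v x) = ∑ i, Q x i * v x i := by
      intro x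
      rw [PiLp.inner_apply]
      exact Finset.sum_congr rfl fun i _ => by simp [mul_comm]
    simp_rw [this]
    have i5 : Integrable (fun x => 2 * (∑ i, Q x i * v x i) - A x) γ := (i4.const_mul 2).sub i2
    rw [integral_sub i5 i3, integral_sub (i4.const_mul 2) i2,
      integral_const_mul, integral_finset_sum _ fun i _ => i1 i]
  have hT : Tendsto (fun n => ∫ x, (2 * inner ℝ (Q x) (ws n x) - A x - B x * ρs n x) ∂γ) atTop
      (nhds (∫ x, (2 * inner ℝ (Q x) (w x) - A x - B x * ρ x) ∂γ)) := by
    rw [heq _ _ hρint hwint]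
    simp_rw [fun n => heq _ _ (hρsint n) (hwsint n)]
    refine ((Tendsto.const_mul 2 (tendsto_finsetSum _ fun i _ =>
      hweakw (fun x => Q x i) (hQic i) ⟨C, hQiC i⟩ i)).sub tendsto_const_nhds).sub
      (hweakρ B hB ⟨C, hBC⟩)
  rw [← (ENNReal.tendsto_ofReal hT).liminf_eq]
  refine liminf_le_liminf (Eventually.of_forall fun n => ?_)
  exact (ofReal_int_le (hint _ _ (hρsint n) (hwsint n))).trans
    (lintegral_mono fun x => hle x _ _ (hρs0 n x))

lemma core_ae
    (d : ℕ) (γ : Measure (EuclideanSpace ℝ (Fin d))) [IsFiniteMeasure γ]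
    (h : ℝ → ℝ)
    (ρs : ℕ → EuclideanSpace ℝ (Fin d) → ℝ) (ρ : EuclideanSpace ℝ (Fin d) → ℝ)
    (ws : ℕ → EuclideanSpace ℝ (Fin d) → EuclideanSpace ℝ (Fin d))
    (w : EuclideanSpace ℝ (Fin d) → EuclideanSpace ℝ (Fin d))
    (hρsint : ∀ n, Integrable (ρs n) γ) (hρint : Integrable ρ γ)
    (hρs0 : ∀ n x, 0 ≤ ρs n x)
    (hwsint : ∀ n, Integrable (ws n) γ) (hwint : Integrable w γ)
    (hweakρ : ∀ f : EuclideanSpace ℝ (Fin d) → ℝ, Continuous f → (∃ C, ∀ x, |f x| ≤ C) →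
      Tendsto (fun n => ∫ x, f x * ρs n x ∂γ) atTop (nhds (∫ x, f x * ρ x ∂γ)))
    (hweakw : ∀ f : EuclideanSpace ℝ (Fin d) → ℝ, Continuous f → (∃ C, ∀ x, |f x| ≤ C) →
      ∀ i : Fin d,
        Tendsto (fun n => ∫ x, f x * ws n x i ∂γ) atTop (nhds (∫ x, f x * w x i ∂γ)))
    (Q : ℝ × EuclideanSpace ℝ (Fin d) → EuclideanSpace ℝ (Fin d))
    (A B : ℝ × EuclideanSpace ℝ (Fin d) → ℝ) (hQ : Continuous Q) (hA : Continuous A)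
    (hB : Continuous B) (C : ℝ) (hQC : ∀ x, ‖Q x‖ ≤ C) (hAC : ∀ x, |A x| ≤ C)
    (hBC : ∀ x, |B x| ≤ C)
    (hle : ∀ x r v, 0 ≤ r → ENNReal.ofReal (2 * inner ℝ (Q x) v - A x - B x * r)
      ≤ actionDensityE h r v)
    (hnn : ∀ r v, 0 ≤ r → 0 ≤ 2 * inner ℝ (Q (r, v)) v - A (r, v) - B (r, v) * r)
    (hρ0 : ∀ x, 0 ≤ ρ x) :
    AEMeasurable (fun x => ENNReal.ofReal (2 * inner ℝ (Q (ρ x, w x)) (w x) - A (ρ x, w x)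
      - B (ρ x, w x) * ρ x)) γ ∧
    ∫⁻ x, ENNReal.ofReal (2 * inner ℝ (Q (ρ x, w x)) (w x) - A (ρ x, w x)
      - B (ρ x, w x) * ρ x) ∂γ ≤
      Filter.liminf (fun n => ∫⁻ x, actionDensityE h (ρs n x) (ws n x) ∂γ) atTop := by
  have hpint : Integrable (fun x => (ρ x, w x)) γ := hρint.prodMk hwint
  have hmeas : ∀ p : EuclideanSpace ℝ (Fin d) → ℝ × EuclideanSpace ℝ (Fin d),
      AEStronglyMeasurable p γ → AEStronglyMeasurable
        (fun x => 2 * inner ℝ (Q (p x)) (w x) - A (p x) - B (p x) * ρ x) γ := by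
    intro p hp
    have h1 := hQ.comp_aestronglyMeasurable hp
    have h2 := hA.comp_aestronglyMeasurable hp
    have h3 := hB.comp_aestronglyMeasurable hp
    exact (((h1.inner hwint.1).const_mul 2).sub h2).sub (h3.mul hρint.1)
  have hdom : Integrable (fun x => 2 * (C * ‖w x‖) + C + C * ‖ρ x‖) γ :=
    (((hwint.norm.const_mul C).const_mul 2).add (integrable_const C)).add
        (hρint.norm.const_mul C)
  have hint : Integrable (fun x => 2 * inner ℝ (Q (ρ x, w x)) (w x) - A (ρ x, w x)
      - B (ρ x, w x) * ρ x) γ := hdom.mono' (hmeas _ hpint.1)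
        (Eventually.of_forall fun x => L_bound _ _ _ _ _ _ (hQC _) (hAC _) (hBC _))
  refine ⟨hint.1.aemeasurable.ennreal_ofReal, ?_⟩
  rw [← ofReal_integral_eq_lintegral_ofReal hint
    (Eventually.of_forall fun x => hnn _ _ (hρ0 x))]
  have happ : ∀ k : ℕ, ∃ g : BoundedContinuousFunction (EuclideanSpace ℝ (Fin d))
      (ℝ × EuclideanSpace ℝ (Fin d)),
      eLpNorm ((fun x => (ρ x, w x)) - (g : _ → _)) 1 γ ≤ ((k : ℝ≥0∞) + 1)⁻¹ ∧ MemLp g 1 γ :=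
    fun k => (memLp_one_iff_integrable.2 hpint).exists_boundedContinuous_eLpNorm_sub_le
      ENNReal.one_ne_top (by simp)
  choose g hg hgm using happ
  have ht0 : Tendsto (fun k => eLpNorm ((g k : _ → _) - (fun x => (ρ x, w x))) 1 γ) atTop
      (nhds 0) := by
    refine tendsto_of_tendsto_of_tendsto_of_le_of_le tendsto_const_nhds (h := fun k : ℕ => ((k : ℝ≥0∞) + 1)⁻¹) ?_
      (fun k => zero_le) (fun k => ?_)
    · have := (tendsto_add_atTop_iff_nat 1).2 ENNReal.tendsto_inv_nat_nhds_zero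
      simpa using this
    · rw [eLpNorm_sub_comm]; exact hg k
  obtain ⟨ns, -, hns⟩ := (tendstoInMeasure_of_tendsto_eLpNorm one_ne_zero
    (fun k => (hgm k).1) hpint.1 ht0).exists_seq_tendsto_ae
  have hT : Tendsto (fun k => ∫ x, (2 * inner ℝ (Q (g (ns k) x)) (w x) - A (g (ns k) x)
      - B (g (ns k) x) * ρ x) ∂γ) atTop (nhds (∫ x, (2 * inner ℝ (Q (ρ x, w x)) (w x)
        - A (ρ x, w x) - B (ρ x, w x) * ρ x) ∂γ)) := by
    refine tendsto_integral_of_dominated_convergence _ (fun k => hmeas _ (hgm (ns k)).1) hdom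
      (fun k => Eventually.of_forall fun x => L_bound _ _ _ _ _ _ (hQC _) (hAC _) (hBC _)) ?_
    filter_upwards [hns] with x hx
    have hc : Continuous fun p => 2 * inner ℝ (Q p) (w x) - A p - B p * ρ x := by fun_prop
    exact (hc.tendsto _).comp hx
  refine le_of_tendsto (ENNReal.tendsto_ofReal hT) (Eventually.of_forall fun k => ?_)
  exact core_cont d γ h ρs ρ ws w hρsint hρint hρs0 hwsint hwint hweakρ hweakw
    (fun x => Q (g (ns k) x)) (fun x => A (g (ns k) x)) (fun x => B (g (ns k) x))
    (hQ.comp (g (ns k)).continuous) (hA.comp (g (ns k)).continuous)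
    (hB.comp (g (ns k)).continuous) C (fun x => hQC _) (fun x => hAC _) (fun x => hBC _)
    (fun x => hle _)

lemma sel_exists {E : Type*} [NormedAddCommGroup E] [InnerProductSpace ℝ E]
    (h : ℝ → ℝ) (hcont : ContinuousOn h (Ici 0)) (hconc : ConcaveOn ℝ (Ici 0) h)
    (hmono : MonotoneOn h (Ici 0)) (hnonneg : ∀ x ∈ Ici (0 : ℝ), 0 ≤ h x)
    (hpos : ∀ x ∈ Ioi (0 : ℝ), 0 < h x) (δ : ℝ) (hδ : 0 < δ) :
    ∃ (Q : ℝ × E → E) (A B : ℝ × E → ℝ) (C : ℝ), Continuous Q ∧ Continuous A ∧ Continuous B ∧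
      (∀ x, ‖Q x‖ ≤ C) ∧ (∀ x, |A x| ≤ C) ∧ (∀ x, |B x| ≤ C) ∧
      (∀ x r v, 0 ≤ r → ENNReal.ofReal (2 * inner ℝ (Q x) v - A x - B x * r)
        ≤ actionDensityE h r v) ∧
      (∀ r v, 0 ≤ r → 2 * inner ℝ (Q (r, v)) v - A (r, v) - B (r, v) * r =
        ‖v‖ ^ 2 * (2 * (1 + δ * ‖v‖)⁻¹ - (1 + δ * ‖v‖)⁻¹ ^ 2) / h (r + δ)) := by
  have hm0 : ∀ p : ℝ × E, 0 ≤ max p.1 0 := fun p => le_max_right _ _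
  have hHc : Continuous fun p : ℝ × E => h (max p.1 0) :=
    hcont.comp_continuous (by fun_prop) hm0
  have hgc : Continuous fun p : ℝ × E => h (max p.1 0 + δ) :=
    hcont.comp_continuous (by fun_prop) (fun p => add_nonneg (hm0 p) hδ.le)
  have hgpos : ∀ p : ℝ × E, 0 < h (max p.1 0 + δ) := fun p =>
    hpos _ (add_pos_of_nonneg_of_pos (hm0 p) hδ)
  have hdpos : 0 < h δ := hpos _ hδ
  have hgd : ∀ p : ℝ × E, h δ ≤ h (max p.1 0 + δ) := fun p =>
    hmono hδ.le (add_nonneg (hm0 p) hδ.le) (by linarith [hm0 p])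
  have hsec : ∀ (p : ℝ × E) s, 0 ≤ s → h s ≤ h (max p.1 0 + δ) +
      (h (max p.1 0 + δ) - h (max p.1 0)) / δ * (s - max p.1 0) := fun p s hs =>
    sec_bound h hconc hmono δ _ s hδ (hm0 p) hs
  have hβ0 : ∀ p : ℝ × E, 0 ≤ (h (max p.1 0 + δ) - h (max p.1 0)) / δ := fun p =>
    div_nonneg (sub_nonneg.2 (hmono (hm0 p) (add_nonneg (hm0 p) hδ.le) (by linarith))) hδ.le
  have hβ1 : ∀ p : ℝ × E, (h (max p.1 0 + δ) - h (max p.1 0)) / δ ≤ h (max p.1 0 + δ) / δ :=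
    fun p => div_le_div_of_nonneg_right (by linarith [hnonneg _ (hm0 p)]) hδ.le
  have hHH : ∀ p : ℝ × E, 0 ≤ h (max p.1 0) := fun p => hnonneg _ (hm0 p)
  have h00 : 0 ≤ h 0 := hnonneg 0 (by simp)
  have h1 : ∀ p : ℝ × E, 0 < 1 + δ * ‖p.2‖ := fun p => by positivity
  set g : ℝ × E → ℝ := fun p => h (max p.1 0 + δ) with hg
  set β : ℝ × E → ℝ := fun p => (h (max p.1 0 + δ) - h (max p.1 0)) / δ with hβ
  have hβc : Continuous β := (hgc.sub hHc).div_const δ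
  set Q : ℝ × E → E := fun p => ((1 + δ * ‖p.2‖)⁻¹ * (g p)⁻¹) • p.2 with hQ
  have hQc : Continuous Q := by
    refine Continuous.smul (Continuous.mul (Continuous.inv₀ (by fun_prop) fun p => (h1 p).ne')
      (hgc.inv₀ fun p => (hgpos p).ne')) continuous_snd
  have hQn : ∀ p, ‖Q p‖ = (1 + δ * ‖p.2‖)⁻¹ * ‖p.2‖ * (g p)⁻¹ := by
    intro p
    rw [hQ]
    simp only [norm_smul, norm_mul, norm_inv, Real.norm_eq_abs, abs_of_pos (h1 p)]
    rw [abs_of_pos (hgpos p)]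
    ring
  have hc1 : ∀ p : ℝ × E, (1 + δ * ‖p.2‖)⁻¹ * ‖p.2‖ ≤ δ⁻¹ := by
    intro p
    rw [inv_mul_le_iff₀ (h1 p)]
    have : (1 + δ * ‖p.2‖) * δ⁻¹ = δ⁻¹ + ‖p.2‖ := by field_simp
    rw [this]
    have := inv_pos.2 hδ
    linarith
  have hQC : ∀ p, ‖Q p‖ ≤ δ⁻¹ * (h δ)⁻¹ := by
    intro p
    rw [hQn]
    have := hgpos p
    gcongr
    · exact hc1 p
    · exact hgd p
  have hQg : ∀ p, ‖Q p‖ * g p ≤ δ⁻¹ := by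
    intro p
    rw [hQn, mul_assoc, inv_mul_cancel₀ (hgpos p).ne', mul_one]
    exact hc1 p
  have hQQg : ∀ p, ‖Q p‖ ^ 2 * g p ≤ δ⁻¹ * (h δ)⁻¹ * δ⁻¹ := by
    intro p
    rw [pow_two, mul_assoc]
    have := hgpos p
    exact mul_le_mul (hQC p) (hQg p) (by positivity) (by positivity)
  have hα : ∀ p, 0 ≤ g p - β p * max p.1 0 := by
    intro p
    have := hsec p 0 le_rfl
    simp only [hg, hβ]
    linarith
  refine ⟨Q, fun p => ‖Q p‖ ^ 2 * (g p - β p * max p.1 0), fun p => ‖Q p‖ ^ 2 * β p,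
    δ⁻¹ * (h δ)⁻¹ + δ⁻¹ * (h δ)⁻¹ * δ⁻¹ + δ⁻¹ * (h δ)⁻¹ * δ⁻¹ * δ⁻¹, hQc,
    by fun_prop, by fun_prop, ?_, ?_, ?_, ?_, ?_⟩
  · intro p
    have : 0 ≤ δ⁻¹ * (h δ)⁻¹ * δ⁻¹ := by positivity
    have : 0 ≤ δ⁻¹ * (h δ)⁻¹ * δ⁻¹ * δ⁻¹ := by positivity
    linarith [hQC p]
  · intro p
    have : 0 ≤ δ⁻¹ * (h δ)⁻¹ := by positivity
    have : 0 ≤ δ⁻¹ * (h δ)⁻¹ * δ⁻¹ * δ⁻¹ := by positivity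
    rw [abs_of_nonneg (mul_nonneg (sq_nonneg _) (hα p))]
    have h3 : ‖Q p‖ ^ 2 * (g p - β p * max p.1 0) ≤ ‖Q p‖ ^ 2 * g p := by
      gcongr
      linarith [mul_nonneg (hβ0 p) (hm0 p)]
    linarith [hQQg p]
  · intro p
    have : 0 ≤ δ⁻¹ * (h δ)⁻¹ := by positivity
    have : 0 ≤ δ⁻¹ * (h δ)⁻¹ * δ⁻¹ := by positivity
    rw [abs_of_nonneg (mul_nonneg (sq_nonneg _) (hβ0 p))]
    have h3 : ‖Q p‖ ^ 2 * β p ≤ ‖Q p‖ ^ 2 * (g p / δ) := by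
      gcongr
      exact hβ1 p
    have h4 : ‖Q p‖ ^ 2 * (g p / δ) ≤ δ⁻¹ * (h δ)⁻¹ * δ⁻¹ * δ⁻¹ := by
      rw [div_eq_mul_inv, ← mul_assoc]
      exact mul_le_mul_of_nonneg_right (hQQg p) (by positivity)
    linarith
  · intro p r v hr
    refine le_trans (ENNReal.ofReal_le_ofReal ?_) (young (Q p) v (h r) (hnonneg r hr))
    have := mul_le_mul_of_nonneg_left (hsec p r hr) (sq_nonneg ‖Q p‖)
    simp only [hg, hβ]
    linarith
  · intro r v hr
    have e : max r 0 = r := max_eq_left hr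
    have hgr : 0 < h (r + δ) := hpos _ (add_pos_of_nonneg_of_pos hr hδ)
    have h1v : 0 < 1 + δ * ‖v‖ := h1 (r, v)
    simp only [hQn]
    simp only [hg, hβ, hQ, e, inner_smul_left, real_inner_self_eq_norm_sq]
    simp only [conj_trivial]
    field_simp
    ring

lemma sel_tendsto {E : Type*} [NormedAddCommGroup E]
    (h : ℝ → ℝ) (hcont : ContinuousOn h (Ici 0)) (r : ℝ) (hr : 0 ≤ r) (v : E)
    (hpos : ∀ x ∈ Ioi (0 : ℝ), 0 < h x)
    (δ : ℕ → ℝ) (hδ : ∀ k, 0 < δ k) (hδ0 : Tendsto δ atTop (nhds 0)) :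
    Tendsto (fun k => ENNReal.ofReal (‖v‖ ^ 2 *
        (2 * (1 + δ k * ‖v‖)⁻¹ - (1 + δ k * ‖v‖)⁻¹ ^ 2) / h (r + δ k))) atTop
      (nhds (actionDensityE h r v)) := by
  by_cases hv : v = 0
  · simp [hv, actionDensityE]
  have hgt : Tendsto (fun k => h (r + δ k)) atTop (nhds (h r)) := by
    refine (hcont r hr).tendsto.comp (tendsto_nhdsWithin_iff.2 ⟨?_, ?_⟩)
    · simpa using hδ0.const_add r
    · exact Eventually.of_forall fun k => add_nonneg hr (hδ k).le
  have hnt : Tendsto (fun k => ‖v‖ ^ 2 *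
        (2 * (1 + δ k * ‖v‖)⁻¹ - (1 + δ k * ‖v‖)⁻¹ ^ 2)) atTop (nhds (‖v‖ ^ 2)) := by
    have h1 : Tendsto (fun k => (1 + δ k * ‖v‖)⁻¹) atTop (nhds 1) := by
      have := ((hδ0.mul_const ‖v‖).const_add 1).inv₀ (by simp)
      simpa using this
    have := ((h1.const_mul 2).sub (h1.pow 2)).const_mul (‖v‖ ^ 2)
    norm_num at this
    simpa using this
  have heq : ∀ k, ENNReal.ofReal (‖v‖ ^ 2 *
        (2 * (1 + δ k * ‖v‖)⁻¹ - (1 + δ k * ‖v‖)⁻¹ ^ 2) / h (r + δ k)) =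
      ENNReal.ofReal (‖v‖ ^ 2 *
        (2 * (1 + δ k * ‖v‖)⁻¹ - (1 + δ k * ‖v‖)⁻¹ ^ 2)) / ENNReal.ofReal (h (r + δ k)) :=
    fun k => ENNReal.ofReal_div_of_pos (hpos _ (add_pos_of_nonneg_of_pos hr (hδ k)))
  simp_rw [heq]
  refine ENNReal.Tendsto.div (ENNReal.tendsto_ofReal hnt) (Or.inl ?_)
    (ENNReal.tendsto_ofReal hgt) (Or.inr ?_)
  · simpa using hv
  · simpa using hv

/-- Lower semicontinuity of the action functional with respect to weak*
convergence of the measures `ρ_n·γ → ρ·γ` and `w_n·γ → w·γ` (tested against bounded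
continuous functions, componentwise for the vector parts). -/
theorem action_lower_semicontinuous
    (d : ℕ) (γ : Measure (EuclideanSpace ℝ (Fin d))) [IsFiniteMeasure γ]
    (h : ℝ → ℝ) (hcont : ContinuousOn h (Ici 0)) (hconc : ConcaveOn ℝ (Ici 0) h)
    (hmono : MonotoneOn h (Ici 0)) (hnonneg : ∀ x ∈ Ici (0 : ℝ), 0 ≤ h x)
    (hpos : ∀ x ∈ Ioi (0 : ℝ), 0 < h x)
    (ρs : ℕ → EuclideanSpace ℝ (Fin d) → ℝ) (ρ : EuclideanSpace ℝ (Fin d) → ℝ)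
    (ws : ℕ → EuclideanSpace ℝ (Fin d) → EuclideanSpace ℝ (Fin d))
    (w : EuclideanSpace ℝ (Fin d) → EuclideanSpace ℝ (Fin d))
    (hρsint : ∀ n, Integrable (ρs n) γ) (hρint : Integrable ρ γ)
    (hρs0 : ∀ n x, 0 ≤ ρs n x) (hρ0 : ∀ x, 0 ≤ ρ x)
    (hwsint : ∀ n, Integrable (ws n) γ) (hwint : Integrable w γ)
    (hweakρ : ∀ f : EuclideanSpace ℝ (Fin d) → ℝ, Continuous f → (∃ C, ∀ x, |f x| ≤ C) →
      Tendsto (fun n => ∫ x, f x * ρs n x ∂γ) atTop (nhds (∫ x, f x * ρ x ∂γ)))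
    (hweakw : ∀ f : EuclideanSpace ℝ (Fin d) → ℝ, Continuous f → (∃ C, ∀ x, |f x| ≤ C) →
      ∀ i : Fin d,
        Tendsto (fun n => ∫ x, f x * ws n x i ∂γ) atTop (nhds (∫ x, f x * w x i ∂γ))) :
    (∫⁻ x, actionDensityE h (ρ x) (w x) ∂γ) ≤
      Filter.liminf (fun n => ∫⁻ x, actionDensityE h (ρs n x) (ws n x) ∂γ) atTop := by
  set δ : ℕ → ℝ := fun k => 1 / ((k : ℝ) + 1) with hδd
  have hδ : ∀ k, 0 < δ k := fun k => by positivity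
  have hδ0 : Tendsto δ atTop (nhds 0) := tendsto_one_div_add_atTop_nhds_zero_nat
  choose Q A B C hQ hA hB hQC hAC hBC hle heq using fun k =>
    sel_exists (E := EuclideanSpace ℝ (Fin d)) h hcont hconc hmono hnonneg hpos (δ k) (hδ k)
  have hmain := fun k => core_ae d γ h ρs ρ ws w hρsint hρint hρs0 hwsint hwint hweakρ hweakw
    (Q k) (A k) (B k) (hQ k) (hA k) (hB k) (C k) (hQC k) (hAC k) (hBC k) (hle k)
    (by
      intro r v hr
      rw [heq k r v hr]
      have hp : 0 < h (r + δ k) := hpos _ (add_pos_of_nonneg_of_pos hr (hδ k))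
      have h1 : 1 ≤ 1 + δ k * ‖v‖ := by
        have := mul_nonneg (hδ k).le (norm_nonneg v)
        linarith
      have h2 : (1 + δ k * ‖v‖)⁻¹ ≤ 1 := inv_le_one_of_one_le₀ h1
      have h3 : 0 ≤ (1 + δ k * ‖v‖)⁻¹ := by positivity
      refine div_nonneg (mul_nonneg (sq_nonneg _) ?_) hp.le
      nlinarith) hρ0
  calc ∫⁻ x, actionDensityE h (ρ x) (w x) ∂γ
      = ∫⁻ x, liminf (fun k => ENNReal.ofReal (2 * inner ℝ (Q k (ρ x, w x)) (w x)
          - A k (ρ x, w x) - B k (ρ x, w x) * ρ x)) atTop ∂γ := by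
        refine lintegral_congr fun x => ?_
        simp_rw [fun k => heq k (ρ x) (w x) (hρ0 x)]
        exact (sel_tendsto h hcont (ρ x) (hρ0 x) (w x) hpos δ hδ hδ0).liminf_eq.symm
    _ ≤ liminf (fun k => ∫⁻ x, ENNReal.ofReal (2 * inner ℝ (Q k (ρ x, w x)) (w x)
          - A k (ρ x, w x) - B k (ρ x, w x) * ρ x) ∂γ) atTop :=
        lintegral_liminf_le' fun k => (hmain k).1
    _ ≤ _ := by
        refine (liminf_le_liminf (Eventually.of_forall fun k => (hmain k).2)).trans ?_
        rw [liminf_const]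
end

section
/- Let V : ℝ^d → ℝ be C² with bounded second derivatives and ∫ e^{−V} dx < ∞, and let γ be the measure with density e^{−V} with respect to Lebesgue measure. Let h : (0,∞) → (0,∞) be C², concave and nondecreasing, and let ψ : (0,∞) → ℝ be C² with ψ'' = 1/h and ψ(1) = ψ'(1) = 0. Let ρ : [0,∞)×ℝ^d → ℝ be a smooth solution of ∂_t ρ = Δρ − ∇V·∇ρ with 0 < m ≤ ρ ≤ M for constants m, M, and all partial derivatives bounded on [0,T]×ℝ^d for every T > 0. Then the function t ↦ Ψ(ρ_t) := ∫ ψ(ρ(t,x)) dγ(x) is differentiable on (0,∞) and for every t > 0 its derivative equals −P(ρ_t) := −∫_{ℝ^d} ψ''(ρ(t,x)) |∇ρ(t,x)|² dγ(x). -/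
open Set MeasureTheory Filter

/-- Partial derivative `∂_i f` of a scalar function on `ℝᵈ`. -/
noncomputable def pd {d : ℕ} (f : EuclideanSpace ℝ (Fin d) → ℝ) (i : Fin d)
    (x : EuclideanSpace ℝ (Fin d)) : ℝ :=
  fderiv ℝ f x (EuclideanSpace.single i 1)


theorem kfp_cutoff (d : ℕ) : ∃ (χ : ℕ → EuclideanSpace ℝ (Fin d) → ℝ) (C : ℝ), 0 ≤ C ∧
    (∀ n, ContDiff ℝ 1 (χ n)) ∧ (∀ n, HasCompactSupport (χ n)) ∧ (∀ n x, ‖χ n x‖ ≤ 1) ∧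
    (∀ x, Tendsto (fun n => χ n x) atTop (nhds 1)) ∧
    (∀ n x, ‖fderiv ℝ (χ n) x‖ ≤ (1 / ((n : ℝ) + 1)) * C) := by
  let f : ContDiffBump (0 : EuclideanSpace ℝ (Fin d)) := ⟨1, 2, by norm_num, by norm_num⟩
  have hf : ContDiff ℝ 1 f := f.contDiff
  have hc : HasCompactSupport (fderiv ℝ f) := f.hasCompactSupport.fderiv ℝ
  obtain ⟨C, hC⟩ := hc.exists_bound_of_continuous (hf.continuous_fderiv (by norm_num))
  have hpos : ∀ n : ℕ, (0 : ℝ) < 1 / ((n : ℝ) + 1) := fun n => by positivity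
  have ht : Tendsto (fun n : ℕ => 1 / ((n : ℝ) + 1)) atTop (nhds 0) :=
    tendsto_one_div_add_atTop_nhds_zero_nat
  refine ⟨fun n x => f ((1 / ((n : ℝ) + 1)) • x), C, (norm_nonneg _).trans (hC 0), ?_, ?_, ?_, ?_, ?_⟩
  · intro n
    exact hf.comp (contDiff_const_smul _)
  · intro n
    exact f.hasCompactSupport.comp_smul (hpos n).ne'
  · intro n x
    rw [Real.norm_of_nonneg f.nonneg]
    exact f.le_one
  · intro x
    have h1 : Tendsto (fun n : ℕ => (1 / ((n : ℝ) + 1)) • x) atTop (nhds 0) := by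
      simpa using ht.smul_const x
    have h2 := (hf.continuous.tendsto 0).comp h1
    have h3 : f 0 = 1 := f.one_of_mem_closedBall (by simp [f])
    rw [h3] at h2
    exact h2
  · intro n x
    rw [fderiv_comp_smul, norm_smul, Real.norm_of_nonneg (hpos n).le]
    exact mul_le_mul_of_nonneg_left (hC _) (hpos n).le

theorem kfp_integral_div_eq_zero (d : ℕ) (F : Fin d → EuclideanSpace ℝ (Fin d) → ℝ)
    (hF : ∀ i, ContDiff ℝ 1 (F i)) (hFi : ∀ i, Integrable (F i))
    (hdiv : Integrable (fun x => ∑ i, pd (F i) i x)) :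
    ∫ x, ∑ i, pd (F i) i x = 0 := by
  obtain ⟨χ, C, hC0, hχ, hχs, hχ1, hχt, hχd⟩ := kfp_cutoff d
  have hFc : ∀ i, Continuous (pd (F i) i) := fun i =>
    ((hF i).continuous_fderiv (by norm_num)).clm_apply continuous_const
  have hdχ : ∀ n i, Continuous (fun x => fderiv ℝ (χ n) x (EuclideanSpace.single i 1)) :=
    fun n i => ((hχ n).continuous_fderiv (by norm_num)).clm_apply continuous_const
  have hdχb : ∀ n i x, ‖fderiv ℝ (χ n) x (EuclideanSpace.single i 1)‖
      ≤ (1 / ((n : ℝ) + 1)) * C := by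
    intro n i x
    refine (ContinuousLinearMap.le_opNorm _ _).trans ?_
    simpa using hχd n x
  have hint1 : ∀ n i, Integrable (fun x => χ n x * pd (F i) i x) := fun n i =>
    ((hχ n).continuous.mul (hFc i)).integrable_of_hasCompactSupport (hχs n).mul_right
  have hint2 : ∀ n i, Integrable
      (fun x => fderiv ℝ (χ n) x (EuclideanSpace.single i 1) * F i x) := fun n i =>
    (hFi i).bdd_mul (hdχ n i).aestronglyMeasurable (Eventually.of_forall (hdχb n i))
  have hkey : ∀ n, ∫ x, χ n x * ∑ i, pd (F i) i x =
      -∑ i, ∫ x, fderiv ℝ (χ n) x (EuclideanSpace.single i 1) * F i x := by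
    intro n
    simp_rw [Finset.mul_sum]
    rw [integral_finsetSum _ (fun i _ => hint1 n i), ← Finset.sum_neg_distrib]
    refine Finset.sum_congr rfl fun i _ => ?_
    exact integral_mul_fderiv_eq_neg_fderiv_mul_of_integrable (hint2 n i) (hint1 n i)
      (((hχ n).continuous.mul (hF i).continuous).integrable_of_hasCompactSupport
        (hχs n).mul_right)
      (fun x _ => (hχ n).differentiable (by norm_num) x)
      (fun x _ => (hF i).differentiable (by norm_num) x)
  have hL : Tendsto (fun n => ∫ x, χ n x * ∑ i, pd (F i) i x) atTop
      (nhds (∫ x, ∑ i, pd (F i) i x)) := by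
    refine tendsto_integral_of_dominated_convergence (fun x => ‖∑ i, pd (F i) i x‖)
      (fun n => (hχ n).continuous.aestronglyMeasurable.mul hdiv.aestronglyMeasurable)
      hdiv.norm (fun n => Eventually.of_forall fun x => ?_) (Eventually.of_forall fun x => ?_)
    · rw [norm_mul]
      exact mul_le_of_le_one_left (norm_nonneg _) (hχ1 n x)
    · simpa using (hχt x).mul_const (∑ i, pd (F i) i x)
  have ht : Tendsto (fun n : ℕ => 1 / ((n : ℝ) + 1)) atTop (nhds 0) :=
    tendsto_one_div_add_atTop_nhds_zero_nat
  have hR : Tendsto (fun n => -∑ i, ∫ x, fderiv ℝ (χ n) x (EuclideanSpace.single i 1) * F i x)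
      atTop (nhds 0) := by
    rw [← neg_zero]
    refine Tendsto.neg ?_
    rw [← Finset.sum_const_zero (s := (Finset.univ : Finset (Fin d)))]
    refine tendsto_finsetSum _ fun i _ => ?_
    refine squeeze_zero_norm (a := fun n : ℕ => (1 / ((n : ℝ) + 1)) * (C * ∫ x, ‖F i x‖)) ?_ ?_
    · intro n
      refine (norm_integral_le_integral_norm _).trans ?_
      rw [← mul_assoc, ← integral_const_mul]
      refine integral_mono (hint2 n i).norm ((hFi i).norm.const_mul _) fun x => ?_
      simp only [norm_mul]
      exact mul_le_mul_of_nonneg_right (hdχb n i x) (norm_nonneg _)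
    · simpa using ht.mul_const (C * ∫ x, ‖F i x‖)
  simp_rw [hkey] at hL
  exact tendsto_nhds_unique hL hR

theorem kfp_norm_gradient_sq {d : ℕ} (f : EuclideanSpace ℝ (Fin d) → ℝ)
    (x : EuclideanSpace ℝ (Fin d)) : ‖gradient f x‖ ^ 2 = ∑ i, pd f i x ^ 2 := by
  rw [EuclideanSpace.norm_sq_eq]
  refine Finset.sum_congr rfl fun i _ => ?_
  have : pd f i x = gradient f x i := by
    rw [pd, ← toDual_gradient, InnerProductSpace.toDual_apply_apply,
      EuclideanSpace.inner_single_right]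
    simp
  rw [this, Real.norm_eq_abs, sq_abs]

/-- Along the Kolmogorov–Fokker–Planck flow `∂_t ρ = Δρ − ∇V·∇ρ`, the
entropy `Ψ(ρ_t) = ∫ ψ(ρ_t) dγ` is differentiable in `t` with derivative
`−P(ρ_t) = −∫ ψ''(ρ_t) |∇ρ_t|² dγ`. -/
theorem entropy_derivative_along_KFP
    (d : ℕ)
    (V : EuclideanSpace ℝ (Fin d) → ℝ) (hV : ContDiff ℝ 2 V)
    (hVbdd : ∃ C, ∀ x, ‖iteratedFDeriv ℝ 2 V x‖ ≤ C)
    (hVint : Integrable (fun x => Real.exp (-V x)))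
    (γ : Measure (EuclideanSpace ℝ (Fin d)))
    (hγ : γ = volume.withDensity fun x => ENNReal.ofReal (Real.exp (-V x)))
    (h : ℝ → ℝ) (hh : ContDiffOn ℝ 2 h (Ioi 0)) (hconc : ConcaveOn ℝ (Ioi 0) h)
    (hmono : MonotoneOn h (Ioi 0)) (hpos : ∀ x ∈ Ioi (0 : ℝ), 0 < h x)
    (ψ : ℝ → ℝ) (hψC2 : ContDiffOn ℝ 2 ψ (Ioi 0))
    (hψ'' : ∀ x ∈ Ioi (0 : ℝ), deriv (deriv ψ) x = 1 / h x)
    (hψ1 : ψ 1 = 0) (hψ'1 : deriv ψ 1 = 0)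
    (ρ : ℝ × EuclideanSpace ℝ (Fin d) → ℝ) (hρ : ContDiff ℝ (⊤ : ℕ∞) ρ)
    (m M : ℝ) (hm : 0 < m) (hbounds : ∀ p, ρ p ∈ Icc m M)
    (hρder : ∀ (n : ℕ) (T : ℝ), ∃ C, ∀ p : ℝ × EuclideanSpace ℝ (Fin d),
      p.1 ∈ Icc 0 T → ‖iteratedFDeriv ℝ n ρ p‖ ≤ C)
    (hρeq : ∀ t ≥ (0 : ℝ), ∀ x, deriv (fun s => ρ (s, x)) t =
      (∑ i, pd (pd (fun z => ρ (t, z)) i) i x)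
        - ∑ i, pd V i x * pd (fun z => ρ (t, z)) i x) :
    ∀ t > (0 : ℝ),
      HasDerivAt (fun s => ∫ x, ψ (ρ (s, x)) ∂γ)
        (-(∫ x, deriv (deriv ψ) (ρ (t, x)) * ‖gradient (fun y => ρ (t, y)) x‖ ^ 2 ∂γ))
        t := by
  intro t ht
  have hfin : IsFiniteMeasure γ := by
    rw [hγ]; exact isFiniteMeasure_withDensity_ofReal hVint.2
  have hIγ : ∀ g : EuclideanSpace ℝ (Fin d) → ℝ,
      ∫ x, g x ∂γ = ∫ x, Real.exp (-V x) * g x := by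
    intro g
    rw [hγ, integral_withDensity_eq_integral_toReal_smul]
    · refine integral_congr_ae (Eventually.of_forall fun x => ?_)
      simp [ENNReal.toReal_ofReal (Real.exp_pos _).le]
    · exact (Real.continuous_exp.comp hV.continuous.neg).measurable.ennreal_ofReal
    · exact Eventually.of_forall fun x => ENNReal.ofReal_lt_top
  have hρpos : ∀ p, ρ p ∈ Ioi (0 : ℝ) := fun p => hm.trans_le (hbounds p).1
  have hsub : Icc m M ⊆ Ioi (0 : ℝ) := fun y hy => hm.trans_le hy.1
  -- regularity of ψ
  have hψ1C : ContDiffOn ℝ 1 (deriv ψ) (Ioi 0) :=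
    hψC2.deriv_of_isOpen isOpen_Ioi (by norm_num)
  have hψ2C : ContinuousOn (deriv (deriv ψ)) (Ioi 0) :=
    hψ1C.continuousOn_deriv_of_isOpen isOpen_Ioi (by norm_num)
  have hψd : ∀ y ∈ Ioi (0 : ℝ), HasDerivAt ψ (deriv ψ y) y := fun y hy =>
    ((hψC2.contDiffAt (isOpen_Ioi.mem_nhds hy)).differentiableAt (by norm_num)).hasDerivAt
  have hψd2 : ∀ y ∈ Ioi (0 : ℝ), HasDerivAt (deriv ψ) (deriv (deriv ψ) y) y := fun y hy =>
    ((hψ1C.contDiffAt (isOpen_Ioi.mem_nhds hy)).differentiableAt (by norm_num)).hasDerivAt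
  obtain ⟨K0, hK0⟩ := isCompact_Icc.exists_bound_of_continuousOn (hψC2.continuousOn.mono hsub)
  obtain ⟨K1, hK1⟩ := isCompact_Icc.exists_bound_of_continuousOn (hψ1C.continuousOn.mono hsub)
  obtain ⟨K2, hK2⟩ := isCompact_Icc.exists_bound_of_continuousOn (hψ2C.mono hsub)
  -- derivatives of ρ
  obtain ⟨C, hC⟩ := hρder 1 (2 * t)
  simp_rw [norm_iteratedFDeriv_one] at hC
  have hρd : Differentiable ℝ ρ := hρ.differentiable (by simp)
  have hρc : Continuous ρ := hρ.continuous
  have hfc : Continuous (fderiv ℝ ρ) := hρ.continuous_fderiv (by simp)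
  have htd : ∀ s x, HasDerivAt (fun s => ρ (s, x)) (fderiv ℝ ρ (s, x) (1, 0)) s := by
    intro s x
    have h1 : HasDerivAt (fun s : ℝ => (s, x)) ((1 : ℝ), (0 : EuclideanSpace ℝ (Fin d))) s :=
      (hasDerivAt_id s).prodMk (hasDerivAt_const s x)
    exact (hρd (s, x)).hasFDerivAt.comp_hasDerivAt s h1
  have hxsm : ContDiff ℝ (⊤ : ℕ∞) (fun z => ρ (t, z)) :=
    hρ.comp (contDiff_const.prodMk contDiff_id)
  have hpdx : ∀ i x, pd (fun z => ρ (t, z)) i x =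
      fderiv ℝ ρ (t, x) (0, EuclideanSpace.single i 1) := by
    intro i x
    have h1 : HasFDerivAt (fun z : EuclideanSpace ℝ (Fin d) => (t, z))
        ((0 : EuclideanSpace ℝ (Fin d) →L[ℝ] ℝ).prod (ContinuousLinearMap.id ℝ _)) x :=
      (hasFDerivAt_const t x).prodMk (hasFDerivAt_id x)
    have h2 := (hρd (t, x)).hasFDerivAt.comp x h1
    have h3 : fderiv ℝ (fun z => ρ (t, z)) x = _ := h2.fderiv
    rw [pd, h3]
    simp
  have htmem : ∀ x : EuclideanSpace ℝ (Fin d), ((t, x) : ℝ × _).1 ∈ Icc 0 (2 * t) := fun x =>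
    ⟨ht.le, by simp only; linarith⟩
  have hC0 : 0 ≤ C := (norm_nonneg _).trans (hC (t, 0) (htmem 0))
  have htb : ∀ s ∈ Icc 0 (2 * t), ∀ x, ‖fderiv ℝ ρ (s, x) (1, 0)‖ ≤ C := by
    intro s hs x
    refine (ContinuousLinearMap.le_of_opNorm_le _ (hC (s, x) hs) _).trans ?_
    simp [Prod.norm_def]
  have hpb : ∀ i x, ‖pd (fun z => ρ (t, z)) i x‖ ≤ C := by
    intro i x
    rw [hpdx]
    refine (ContinuousLinearMap.le_of_opNorm_le _ (hC (t, x) (htmem x)) _).trans ?_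
    simp [Prod.norm_def]
  have hpC : ∀ i, ContDiff ℝ 1 (pd (fun z => ρ (t, z)) i) := by
    intro i
    exact ((contDiff_infty.1 hxsm 2).fderiv_right (m := 1) (by norm_num)).clm_apply contDiff_const
  have hexpC : ContDiff ℝ 1 (fun x => Real.exp (-V x)) :=
    Real.contDiff_exp.comp (hV.of_le (by norm_num)).neg
  have hψρc : ∀ s, Continuous (fun x => ψ (ρ (s, x))) := fun s =>
    hψC2.continuousOn.comp_continuous (by fun_prop) (fun x => hρpos _)
  have hψ1ρC : ContDiff ℝ 1 (fun x => deriv ψ (ρ (t, x))) :=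
    hψ1C.comp_contDiff (hxsm.of_le (by exact_mod_cast le_top)) (fun x => hρpos _)
  have hψ2ρc : Continuous (fun x => deriv (deriv ψ) (ρ (t, x))) :=
    hψ2C.comp_continuous (by fun_prop) (fun x => hρpos _)
  have hbc : Continuous (fun x => fderiv ℝ ρ (t, x) (1, 0)) :=
    (hfc.comp (by fun_prop)).clm_apply continuous_const
  -- differentiation under the integral sign
  have hmain := (hasDerivAt_integral_of_dominated_loc_of_deriv_le (μ := γ) (x₀ := t)
    (s := Icc 0 (2 * t)) (F := fun s x => ψ (ρ (s, x)))
    (F' := fun s x => deriv ψ (ρ (s, x)) * fderiv ℝ ρ (s, x) (1, 0))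
    (bound := fun _ => K1 * C)
    (Icc_mem_nhds ht (by linarith))
    (Eventually.of_forall fun s => (hψρc s).aestronglyMeasurable)
    (Integrable.of_bound (hψρc t).aestronglyMeasurable K0
      (Eventually.of_forall fun x => hK0 _ (hbounds _)))
    (hψ1ρC.continuous.mul hbc).aestronglyMeasurable
    (Eventually.of_forall fun x s hs => by
      rw [norm_mul]
      exact mul_le_mul (hK1 _ (hbounds _)) (htb s hs x) (norm_nonneg _)
        ((norm_nonneg _).trans (hK1 _ (hbounds (t, 0)))))
    (integrable_const _)
    (Eventually.of_forall fun x s hs => (hψd _ (hρpos _)).comp s (htd s x))).2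
  refine hmain.congr_deriv ?_
  rw [hIγ, hIγ, eq_neg_iff_add_eq_zero]
  -- the vector field
  let F : Fin d → EuclideanSpace ℝ (Fin d) → ℝ := fun i x =>
    Real.exp (-V x) * (deriv ψ (ρ (t, x)) * pd (fun z => ρ (t, z)) i x)
  have hFC : ∀ i, ContDiff ℝ 1 (F i) := fun i => hexpC.mul (hψ1ρC.mul (hpC i))
  have hFi : ∀ i, Integrable (F i) := by
    intro i
    refine hVint.mul_bdd (c := K1 * C) (hψ1ρC.mul (hpC i)).continuous.aestronglyMeasurable
      (Eventually.of_forall fun x => ?_)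
    rw [norm_mul]
    exact mul_le_mul (hK1 _ (hbounds _)) (hpb i x) (norm_nonneg _)
      ((norm_nonneg _).trans (hK1 _ (hbounds (t, 0))))
  have hpdF : ∀ i x, pd (F i) i x = Real.exp (-V x) *
      (deriv ψ (ρ (t, x)) * (pd (pd (fun z => ρ (t, z)) i) i x
          - pd V i x * pd (fun z => ρ (t, z)) i x)
        + deriv (deriv ψ) (ρ (t, x)) * pd (fun z => ρ (t, z)) i x ^ 2) := by
    intro i x
    have e1 : HasFDerivAt (fun x => Real.exp (-V x)) (Real.exp (-V x) • -fderiv ℝ V x) x :=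
      ((hV.differentiable (by norm_num) x).hasFDerivAt.neg).exp
    have e2 : HasFDerivAt (fun x => deriv ψ (ρ (t, x)))
        (deriv (deriv ψ) (ρ (t, x)) • fderiv ℝ (fun z => ρ (t, z)) x) x :=
      (hψd2 _ (hρpos _)).comp_hasFDerivAt (f := fun z => ρ (t, z)) x (hxsm.differentiable (by simp) x).hasFDerivAt
    have e3 := ((hpC i).differentiable (by norm_num) x).hasFDerivAt
    have e4 : fderiv ℝ (F i) x = _ := (e1.mul (e2.mul e3)).fderiv
    rw [pd, e4]
    simp only [add_apply, smul_apply, neg_apply, smul_eq_mul, Pi.mul_apply]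
    simp only [pd]
    ring
  have hdivF : ∀ x, ∑ i, pd (F i) i x =
      Real.exp (-V x) * (deriv ψ (ρ (t, x)) * fderiv ℝ ρ (t, x) (1, 0)) +
      Real.exp (-V x) * (deriv (deriv ψ) (ρ (t, x)) * ‖gradient (fun y => ρ (t, y)) x‖ ^ 2) := by
    intro x
    have hq := hρeq t ht.le x
    rw [(htd t x).deriv] at hq
    simp_rw [hpdF]
    rw [hq, kfp_norm_gradient_sq, ← Finset.mul_sum, Finset.sum_add_distrib, ← Finset.mul_sum,
      ← Finset.mul_sum, Finset.sum_sub_distrib]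
    ring
  have hI1 : Integrable (fun x => Real.exp (-V x) *
      (deriv ψ (ρ (t, x)) * fderiv ℝ ρ (t, x) (1, 0))) := by
    refine hVint.mul_bdd (c := K1 * C) (hψ1ρC.continuous.mul hbc).aestronglyMeasurable
      (Eventually.of_forall fun x => ?_)
    rw [norm_mul]
    exact mul_le_mul (hK1 _ (hbounds _)) (htb t (htmem x) x) (norm_nonneg _)
      ((norm_nonneg _).trans (hK1 _ (hbounds (t, 0))))
  have hI2 : Integrable (fun x => Real.exp (-V x) *
      (deriv (deriv ψ) (ρ (t, x)) * ‖gradient (fun y => ρ (t, y)) x‖ ^ 2)) := by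
    simp_rw [kfp_norm_gradient_sq]
    refine hVint.mul_bdd (c := K2 * ∑ _i : Fin d, C ^ 2)
      (hψ2ρc.mul (continuous_finsetSum _ fun i _ =>
        (hpC i).continuous.pow 2)).aestronglyMeasurable
      (Eventually.of_forall fun x => ?_)
    rw [norm_mul]
    refine mul_le_mul (hK2 _ (hbounds _)) ?_ (norm_nonneg _)
      ((norm_nonneg _).trans (hK2 _ (hbounds (t, 0))))
    refine (norm_sum_le _ _).trans (Finset.sum_le_sum fun i _ => ?_)
    rw [norm_pow]
    exact pow_le_pow_left₀ (norm_nonneg _) (hpb i x) 2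
  rw [← integral_add hI1 hI2]
  simp_rw [← hdivF]
  refine kfp_integral_div_eq_zero d F hFC hFi ?_
  simp_rw [hdivF]
  exact hI1.add hI2
end
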